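/- Let G be a finite abelian group, and let G₀ ⊆ G be a minimal non-half-factorial LCN-set with min Δ(G₀) = max Δ*(G). Let g ∈ G₀ satisfy g ∈ ⟨G₀ \ {g}⟩, and let d ∈ [1, ord(g)] be minimal such that d·g ∈ ⟨E⟩ for some proper subset E ⊊ G₀ \ {g}. Then d divides ord(g), and for any two atoms A₁, A₂ over G₀ with v_g(A₁) ≡ v_g(A₂) (mod d), one has k(A₁) = k(A₂). -/

import Mathlib

open Multiset

section Defs

variable {G : Type*} [AddCommGroup G]

/-- `S` is a zero-sum sequence over `G₀`: a multiset with entries in `G₀` and sum `0`. -/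
def IsZeroSumSeq (G₀ : Set G) (S : Multiset G) : Prop :=
  (∀ x ∈ S, x ∈ G₀) ∧ S.sum = 0

/-- `S` is an atom over `G₀`: a nonempty zero-sum sequence over `G₀` that is not the
union of two nonempty zero-sum sequences over `G₀`. -/
def IsAtomSeq (G₀ : Set G) (S : Multiset G) : Prop :=
  IsZeroSumSeq G₀ S ∧ S ≠ 0 ∧
    ∀ A B : Multiset G, IsZeroSumSeq G₀ A → IsZeroSumSeq G₀ B →
      A ≠ 0 → B ≠ 0 → S ≠ A + B

/-- The set of lengths of `B`: all `k` such that `B` is a union of `k` atoms over `G₀`. -/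
def LengthSet (G₀ : Set G) (B : Multiset G) : Set ℕ :=
  {k | ∃ l : Multiset (Multiset G), Multiset.card l = k ∧
      (∀ A ∈ l, IsAtomSeq G₀ A) ∧ l.sum = B}

/-- The set of successive distances of a set of naturals. -/
def DeltaOf (L : Set ℕ) : Set ℕ :=
  {d | ∃ x ∈ L, ∃ y ∈ L, x < y ∧ y - x = d ∧ ∀ z ∈ L, ¬(x < z ∧ z < y)}

/-- The set of distances `Δ(G₀)`. -/
def DeltaSet (G₀ : Set G) : Set ℕ :=
  {d | ∃ B : Multiset G, IsZeroSumSeq G₀ B ∧ B ≠ 0 ∧ d ∈ DeltaOf (LengthSet G₀ B)}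

/-- `G₀` is half-factorial if `Δ(G₀) = ∅`. -/
def IsHalfFactorialSet (G₀ : Set G) : Prop := DeltaSet G₀ = ∅

/-- `G₀` is minimal non-half-factorial if `Δ(G₀) ≠ ∅` and every proper subset is
half-factorial. -/
def IsMinNonHalfFactorial (G₀ : Set G) : Prop :=
  (DeltaSet G₀).Nonempty ∧ ∀ G₁ : Set G, G₁ ⊂ G₀ → DeltaSet G₁ = ∅

/-- The cross number `k(S) = Σ 1/ord(g)` of a multiset over `G`. -/
noncomputable def crossNumber (S : Multiset G) : ℚ :=
  (S.map (fun g => ((addOrderOf g : ℚ))⁻¹)).sum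

/-- `G₀` is an LCN-set if every atom over `G₀` has cross number at least 1. -/
def IsLCNSet (G₀ : Set G) : Prop :=
  ∀ U : Multiset G, IsAtomSeq G₀ U → 1 ≤ crossNumber U

/-- A subset of `G \ {0}` is independent if any integral linear relation on its elements
has all summands zero. -/
def IsIndependentSet (E : Set G) : Prop :=
  (0 : G) ∉ E ∧ ∀ s : Finset G, ↑s ⊆ E → ∀ f : G → ℤ,
    (∑ e ∈ s, f e • e) = 0 → ∀ e ∈ s, f e • e = 0

/-- `d` is a greatest common divisor of the set `S` of naturals. -/
def IsSetGcd (S : Set ℕ) (d : ℕ) : Prop :=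
  (∀ s ∈ S, d ∣ s) ∧ ∀ e : ℕ, (∀ s ∈ S, e ∣ s) → e ∣ d

end Defs

/-- The set of minimal distances `Δ*(G)`. -/
def DeltaStar (G : Type*) [AddCommGroup G] : Set ℕ :=
  {d | ∃ G₀ : Set G, (DeltaSet G₀).Nonempty ∧ d = sInf (DeltaSet G₀)}

/-- The `p`-rank of a finite abelian group: `log_p` of the order of the `p`-torsion
subgroup `{x | p • x = 0}`. -/
noncomputable def pRank (G : Type*) [AddCommGroup G] (p : ℕ) : ℕ :=
  Nat.log p (Nat.card {x : G // p • x = 0})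

/-- The rank of a finite abelian group: the maximum of the `p`-ranks over all primes. -/
noncomputable def rankG (G : Type*) [AddCommGroup G] : ℕ :=
  sSup {r : ℕ | ∃ p : ℕ, p.Prime ∧ r = pRank G p}

/-!
In a minimal non-half-factorial set `G₀`, every atom missing some element of `G₀` lies over a
half-factorial set and so has cross number one. Comparing the atoms `xⁿ`, `(-x)ⁿ` and `x(-x)`, where
`n = ord x`, gives `ord x - 2 ≤ max Δ*(G) = m`, where `m = min Δ(G₀)`; hence an atom `U` of cross
number one has at most `m + 2` elements.

The key point is that dividing out such a `U` costs at most one factor: if `U` divides a product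
of atoms, take a minimal subproduct `T = U + Y` divisible by `U`. It has at most `|U| ≤ m + 2`
factors, so a loss of more than one factor would be a jump of at least `m` in the lengths of
`U + Y`, which forces `|T| = |U| = m + 2` and `Y` to be an atom. As `G₀` is an LCN-set, `Y` then has
cross number greater than one, so it contains all of `G₀`; minimality of `T` yields `U ≤ Y`, which
is absurd.

Consequently two atoms that become equal after adding atoms of cross number one have the same cross
number. If `v_g(A₁) ≡ v_g(A₂)` modulo `d`, a zero-sum sequence over the proper subset `E ∪ {g}`
makes the two multiplicities of `g` equal, and zero-sum sequences over `G₀ \ {g}` balance the rest.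
-/

section MinimalCovers

variable {α : Type*} {U Y : Multiset α} {T X : Multiset (Multiset α)}

theorem exists_le_card_le_and_le_sum (h : U ≤ X.sum) :
    ∃ T ≤ X, card T ≤ card U ∧ U ≤ T.sum := by
  classical
  induction X using Multiset.induction_on generalizing U with
  | empty => exact ⟨0, le_rfl, by simp, h⟩
  | cons Z X ih =>
    rw [sum_cons, ← tsub_le_iff_left] at h
    obtain ⟨T, hTX, hTU, hcover⟩ := ih h
    by_cases hZ : U ∩ Z = 0
    · rw [← Multiset.sub_add_inter U Z, hZ, add_zero]
      exact ⟨T, hTX.trans (le_cons_self X Z), hTU, hcover⟩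
    · refine ⟨Z ::ₘ T, cons_le_cons Z hTX, ?_, by rwa [sum_cons, ← tsub_le_iff_left]⟩
      have hcard := congrArg card (Multiset.sub_add_inter U Z)
      rw [card_add] at hcard
      have := card_pos.2 hZ
      rw [card_cons]
      omega

theorem card_le_of_minimal_cover (hT : Minimal (fun T : Multiset (Multiset α) ↦ U ≤ T.sum) T) :
    card T ≤ card U := by
  obtain ⟨T', hT'T, hcard, hcover⟩ := exists_le_card_le_and_le_sum hT.prop
  rwa [hT.eq_of_le hcover hT'T] at hcard

theorem card_inter_le_one_of_minimal_cover [DecidableEq α]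
    (hT : Minimal (fun T : Multiset (Multiset α) ↦ U ≤ T.sum) T) (hUT : card U ≤ card T)
    {Z : Multiset α} (hZ : Z ∈ T) : card (U ∩ Z) ≤ 1 := by
  obtain ⟨T₀, rfl⟩ := exists_cons_of_mem hZ
  obtain ⟨T', hT'T₀, hcard, hcover⟩ : ∃ T' ≤ T₀, card T' ≤ card (U - Z) ∧ U - Z ≤ T'.sum :=
    exists_le_card_le_and_le_sum (by simpa only [sum_cons, tsub_le_iff_left] using hT.prop)
  have hT' : Z ::ₘ T₀ = Z ::ₘ T' :=
    (hT.eq_of_le (by rwa [sum_cons, ← tsub_le_iff_left]) (cons_le_cons Z hT'T₀)).symm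
  have hU := congrArg card (Multiset.sub_add_inter U Z)
  rw [card_add] at hU
  rw [hT', card_cons] at hUT
  omega

theorem le_of_minimal_cover_of_subset
    (hT : Minimal (fun T : Multiset (Multiset α) ↦ U ≤ T.sum) T) (hUT : card U ≤ card T)
    (hsum : T.sum = U + Y) (hUY : U ⊆ Y) : U ≤ Y := by
  classical
  by_contra hnot
  obtain ⟨x, hx⟩ : ∃ x, count x Y < count x U := by simpa [le_iff_count] using hnot
  have hxU : x ∈ U := count_pos.1 (by omega)
  have hxY : 0 < count x Y := count_pos.2 (hUY hxU)
  obtain ⟨Z, hZT, hxZ⟩ : ∃ Z ∈ T, x ∈ Z := mem_join.1 (mem_of_le hT.prop hxU)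
  have hinter : U ∩ Z = {x} := (eq_of_le_of_card_le (singleton_le.2 (mem_inter.2 ⟨hxU, hxZ⟩))
    (card_inter_le_one_of_minimal_cover hT hUT hZT)).symm
  obtain ⟨T₀, rfl⟩ := exists_cons_of_mem hZT
  have hcover : U ≤ T₀.sum := by
    refine le_iff_count.2 fun y ↦ ?_
    have hy := congrArg (count y) hinter
    have hy_sum := congrArg (count y) hsum
    rw [count_inter, count_singleton] at hy
    rw [sum_cons, count_add, count_add] at hy_sum
    rcases eq_or_ne y x with rfl | hyx
    · rw [if_pos rfl] at hy
      omega
    · rw [if_neg hyx] at hy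
      omega
  exact (lt_cons_self T₀ Z).ne (hT.eq_of_le hcover (le_cons_self T₀ Z))

end MinimalCovers

section Torsion

variable {G : Type*} [AddCommGroup G]

theorem gcd_addOrderOf_nsmul_mem {H : AddSubgroup G} {g : G} {d : ℕ} (h : d • g ∈ H) :
    d.gcd (addOrderOf g) • g ∈ H := by
  have hbezout : d.gcd (addOrderOf g) • g = d.gcdA (addOrderOf g) • d • g := by
    rw [← natCast_zsmul, Nat.gcd_eq_gcd_ab, add_smul, mul_comm, mul_smul, natCast_zsmul,
      mul_comm, mul_smul, natCast_zsmul, addOrderOf_nsmul_eq_zero, smul_zero, add_zero]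
  exact hbezout ▸ H.zsmul_mem h _

theorem exists_multiset_of_mem_closure_of_isOfFinAddOrder {E : Set G} {x : G}
    (hE : ∀ y ∈ E, IsOfFinAddOrder y) (hx : x ∈ AddSubgroup.closure E) :
    ∃ B : Multiset G, (∀ y ∈ B, y ∈ E) ∧ B.sum = x := by
  rw [← AddSubgroup.mem_toAddSubmonoid,
    AddSubgroup.closure_toAddSubmonoid_of_isOfFinAddOrder hE] at hx
  exact AddSubmonoid.exists_multiset_of_mem_closure hx

theorem exists_pos_forall_addOrderOf_dvd {S : Multiset G} (hS : ∀ x ∈ S, IsOfFinAddOrder x) :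
    ∃ N : ℕ, 0 < N ∧ ∀ x ∈ S, addOrderOf x ∣ N :=
  ⟨(S.map addOrderOf).prod,
    CanonicallyOrderedAdd.multiset_prod_pos.2
      (forall_mem_map_iff.2 fun x hx ↦ (hS x hx).addOrderOf_pos),
    fun _ hx ↦ dvd_prod (mem_map_of_mem _ hx)⟩

end Torsion

section CrossNumber

variable {G : Type*} [AddCommGroup G]

@[simp]
theorem crossNumber_zero : crossNumber (0 : Multiset G) = 0 := rfl

@[simp]
theorem crossNumber_cons (a : G) (S : Multiset G) :
    crossNumber (a ::ₘ S) = (addOrderOf a : ℚ)⁻¹ + crossNumber S := by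
  simp [crossNumber]

theorem crossNumber_add (A B : Multiset G) :
    crossNumber (A + B) = crossNumber A + crossNumber B := by
  simp [crossNumber]

theorem crossNumber_multiset_sum (X : Multiset (Multiset G)) :
    crossNumber X.sum = (X.map crossNumber).sum := by
  induction X using Multiset.induction_on with
  | empty => exact crossNumber_zero
  | cons A X ih => rw [sum_cons, crossNumber_add, ih, map_cons, sum_cons]

theorem crossNumber_sum_eq_card {X : Multiset (Multiset G)} (h : ∀ A ∈ X, crossNumber A = 1) :
    crossNumber X.sum = card X := by
  rw [crossNumber_multiset_sum, map_congr rfl h, map_const', sum_replicate, nsmul_one]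

theorem card_le_crossNumber_sum {X : Multiset (Multiset G)} (h : ∀ A ∈ X, 1 ≤ crossNumber A) :
    (card X : ℚ) ≤ crossNumber X.sum := by
  simpa [crossNumber_multiset_sum] using
    Multiset.card_nsmul_le_sum (s := X.map crossNumber) (a := 1) (forall_mem_map_iff.2 h)

theorem card_le_mul_crossNumber {M : ℕ} {S : Multiset G} (hfin : ∀ x ∈ S, IsOfFinAddOrder x)
    (hM : ∀ x ∈ S, addOrderOf x ≤ M) : (card S : ℚ) ≤ M * crossNumber S := by
  induction S using Multiset.induction_on with
  | empty => simp
  | cons a S ih =>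
    simp only [mem_cons, forall_eq_or_imp] at hfin hM
    have ha : (1 : ℚ) ≤ M * (addOrderOf a : ℚ)⁻¹ := by
      rw [← div_eq_mul_inv, one_le_div (by exact_mod_cast hfin.1.addOrderOf_pos)]
      exact_mod_cast hM.1
    rw [card_cons, Nat.cast_succ, crossNumber_cons, mul_add]
    linarith [ih hfin.2 hM.2]

end CrossNumber

section ZeroSumSequences

variable {G : Type*} [AddCommGroup G] {G₀ G₁ : Set G} {A B S : Multiset G}

theorem IsZeroSumSeq.mono (hA : IsZeroSumSeq G₀ A) (h : G₀ ⊆ G₁) : IsZeroSumSeq G₁ A :=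
  ⟨fun x hx ↦ h (hA.1 x hx), hA.2⟩

theorem IsZeroSumSeq.add (hA : IsZeroSumSeq G₀ A) (hB : IsZeroSumSeq G₀ B) :
    IsZeroSumSeq G₀ (A + B) :=
  ⟨fun x hx ↦ (mem_add.1 hx).elim (hA.1 x) (hB.1 x), by rw [sum_add, hA.2, hB.2, add_zero]⟩

theorem IsZeroSumSeq.multiset_sum {X : Multiset (Multiset G)} (h : ∀ A ∈ X, IsZeroSumSeq G₀ A) :
    IsZeroSumSeq G₀ X.sum :=
  sum_induction (IsZeroSumSeq G₀) X (fun _ _ ↦ IsZeroSumSeq.add) ⟨by simp, sum_zero⟩ h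

theorem IsZeroSumSeq.of_add_left (h : IsZeroSumSeq G₀ (A + B)) (hA : A.sum = 0) :
    IsZeroSumSeq G₀ B :=
  ⟨fun x hx ↦ h.1 x (mem_add.2 (.inr hx)), by simpa [hA] using h.2⟩

theorem isAtomSeq_iff_forall_le : IsAtomSeq G₀ S ↔
    IsZeroSumSeq G₀ S ∧ S ≠ 0 ∧ ∀ A ≤ S, IsZeroSumSeq G₀ A → A ≠ 0 → A = S := by
  refine and_congr_right fun hS ↦ and_congr_right fun _ ↦ ⟨fun h A hle hA hA0 ↦ ?_,
    fun h A B hA _ hA0 hB0 hAB ↦ ?_⟩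
  · obtain ⟨B, rfl⟩ := Multiset.le_iff_exists_add.1 hle
    by_contra hne
    exact h A B hA (hS.of_add_left hA.2) hA0 (fun hB ↦ hne (by rw [hB, add_zero])) rfl
  · have hSA := h A (hAB ▸ le_add_right A B) hA hA0
    exact hB0 (by simpa [hSA] using hAB)

theorem IsAtomSeq.eq_of_le (hS : IsAtomSeq G₀ S) (hA : IsZeroSumSeq G₀ A) (hA0 : A ≠ 0)
    (h : A ≤ S) : A = S :=
  (isAtomSeq_iff_forall_le.1 hS).2.2 A h hA hA0

theorem IsAtomSeq.of_forall_mem (hA : IsAtomSeq G₀ A) (h : ∀ x ∈ A, x ∈ G₁) : IsAtomSeq G₁ A :=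
  isAtomSeq_iff_forall_le.2 ⟨⟨h, hA.1.2⟩, hA.2.1, fun _ hle hB hB0 ↦
    hA.eq_of_le ⟨fun x hx ↦ hA.1.1 x (mem_of_le hle hx), hB.2⟩ hB0 hle⟩

theorem isAtomSeq_replicate_addOrderOf {x : G} (hx : x ∈ G₀) (hfin : IsOfFinAddOrder x) :
    IsAtomSeq G₀ (replicate (addOrderOf x) x) := by
  refine isAtomSeq_iff_forall_le.2 ⟨⟨fun y hy ↦ eq_of_mem_replicate hy ▸ hx, ?_⟩, ?_, ?_⟩
  · rw [sum_replicate, addOrderOf_nsmul_eq_zero]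
  · rw [← card_pos, card_replicate]
    exact hfin.addOrderOf_pos
  · intro A hle hA hA0
    obtain ⟨k, hk, rfl⟩ := le_replicate_iff.1 hle
    have hdvd : addOrderOf x ∣ k := addOrderOf_dvd_of_nsmul_eq_zero (by simpa using hA.2)
    have hpos : 0 < k := by simpa using card_pos.2 hA0
    rw [hk.antisymm (Nat.le_of_dvd hpos hdvd)]

theorem IsAtomSeq.eq_replicate_addOrderOf {x : G} (hA : IsAtomSeq G₀ A) (h : ∀ y ∈ A, y = x) :
    A = replicate (addOrderOf x) x := by
  obtain ⟨k, rfl⟩ : ∃ k, A = replicate k x := ⟨_, eq_replicate_card.2 h⟩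
  have hpos : 0 < k := by simpa using card_pos.2 hA.2.1
  have hxG : x ∈ G₀ := hA.1.1 x (mem_replicate.2 ⟨hpos.ne', rfl⟩)
  have hk : k • x = 0 := by simpa using hA.1.2
  have hatom := isAtomSeq_replicate_addOrderOf hxG
    (isOfFinAddOrder_iff_nsmul_eq_zero.2 ⟨k, hpos, hk⟩)
  exact (hA.eq_of_le hatom.1 hatom.2.1
    (replicate_mono x (Nat.le_of_dvd hpos (addOrderOf_dvd_of_nsmul_eq_zero hk)))).symm

end ZeroSumSequences

section Factorizations

variable {G : Type*} [AddCommGroup G] {G₀ G₁ : Set G} {A B C U : Multiset G}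
  {X Y : Multiset (Multiset G)}

/-- `X` is a factorization of `B` over `G₀`: a multiset of atoms over `G₀` with union `B`.
Its cardinality is the length of the factorization. -/
def IsFactorization (G₀ : Set G) (B : Multiset G) (X : Multiset (Multiset G)) : Prop :=
  (∀ A ∈ X, IsAtomSeq G₀ A) ∧ X.sum = B

theorem IsFactorization.card_mem_lengthSet (hX : IsFactorization G₀ B X) :
    card X ∈ LengthSet G₀ B :=
  ⟨X, rfl, hX⟩

theorem IsFactorization.isZeroSumSeq (hX : IsFactorization G₀ B X) : IsZeroSumSeq G₀ B :=
  hX.2 ▸ .multiset_sum fun A hA ↦ (hX.1 A hA).1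

theorem isFactorization_zero : IsFactorization G₀ 0 0 :=
  ⟨by simp, sum_zero⟩

theorem IsFactorization.add (hX : IsFactorization G₀ B X) (hY : IsFactorization G₀ C Y) :
    IsFactorization G₀ (B + C) (X + Y) :=
  ⟨fun A hA ↦ (mem_add.1 hA).elim (hX.1 A) (hY.1 A), by rw [sum_add, hX.2, hY.2]⟩

theorem IsAtomSeq.isFactorization_replicate (hA : IsAtomSeq G₀ A) (n : ℕ) :
    IsFactorization G₀ (n • A) (replicate n A) :=
  ⟨fun _ hB ↦ eq_of_mem_replicate hB ▸ hA, sum_replicate n A⟩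

theorem IsAtomSeq.isFactorization_singleton (hA : IsAtomSeq G₀ A) : IsFactorization G₀ A {A} :=
  ⟨fun _ hB ↦ mem_singleton.1 hB ▸ hA, sum_singleton A⟩

theorem IsFactorization.cons (hA : IsAtomSeq G₀ A) (hX : IsFactorization G₀ B X) :
    IsFactorization G₀ (A + B) (A ::ₘ X) :=
  hA.isFactorization_singleton.add hX

theorem IsFactorization.mono (hX : IsFactorization G₀ B X) (h : G₀ ⊆ G₁) :
    IsFactorization G₁ B X :=
  ⟨fun A hA ↦ (hX.1 A hA).of_forall_mem fun x hx ↦ h ((hX.1 A hA).1.1 x hx), hX.2⟩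

theorem IsZeroSumSeq.exists_isFactorization (hB : IsZeroSumSeq G₀ B) :
    ∃ X, IsFactorization G₀ B X := by
  induction B using Multiset.strongInductionOn with
  | ih B ih =>
    by_cases hB0 : B = 0
    · exact ⟨0, hB0 ▸ isFactorization_zero⟩
    by_cases hatom : IsAtomSeq G₀ B
    · exact ⟨{B}, hatom.isFactorization_singleton⟩
    obtain ⟨A, C, hA, hC, hA0, hC0, rfl⟩ : ∃ A C, IsZeroSumSeq G₀ A ∧ IsZeroSumSeq G₀ C ∧
        A ≠ 0 ∧ C ≠ 0 ∧ B = A + C := by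
      simpa [IsAtomSeq, hB, hB0] using hatom
    obtain ⟨X, hX⟩ := ih A (lt_add_of_pos_right A (pos_iff_ne_zero.2 hC0)) hA
    obtain ⟨Y, hY⟩ := ih C (lt_add_of_pos_left C (pos_iff_ne_zero.2 hA0)) hC
    exact ⟨X + Y, hX.add hY⟩

theorem IsFactorization.eq_singleton (hX : IsFactorization G₀ A X) (hA : IsAtomSeq G₀ A) :
    X = {A} := by
  obtain ⟨B, hB⟩ : ∃ B, B ∈ X :=
    exists_mem_of_ne_zero fun h ↦ hA.2.1 (by rw [← hX.2, h, sum_zero])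
  have hBA : B = A :=
    hA.eq_of_le (hX.1 B hB).1 (hX.1 B hB).2.1 (hX.2 ▸ le_sum_of_mem hB)
  obtain ⟨Y, rfl⟩ := exists_cons_of_mem hB
  have hYsum : Y.sum = 0 := by simpa [hBA] using hX.2
  have hY : Y = 0 := eq_zero_of_forall_notMem fun C hC ↦ (hX.1 C (mem_cons_of_mem hC)).2.1
    (Multiset.le_zero.1 (hYsum ▸ le_sum_of_mem hC))
  rw [hY, hBA]
  rfl

end Factorizations

section Distances

variable {G : Type*} [AddCommGroup G] {G₀ : Set G} {A B : Multiset G}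
  {X Y : Multiset (Multiset G)}

theorem exists_mem_deltaOf_add_le {L : Set ℕ} {p q : ℕ} (hp : p ∈ L) (hq : q ∈ L) (hpq : p < q) :
    ∃ e ∈ DeltaOf L, p + e ≤ q := by
  classical
  have hex : ∃ r, r ∈ L ∧ p < r := ⟨q, hq, hpq⟩
  obtain ⟨hrL, hpr⟩ := Nat.find_spec hex
  have hrq : Nat.find hex ≤ q := Nat.find_min' hex ⟨hq, hpq⟩
  exact ⟨Nat.find hex - p, ⟨p, hp, _, hrL, hpr, rfl,
    fun z hz hbetween ↦ Nat.find_min hex hbetween.2 ⟨hz, hbetween.1⟩⟩, by omega⟩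

theorem IsFactorization.exists_mem_deltaSet_add_le (hX : IsFactorization G₀ B X)
    (hY : IsFactorization G₀ B Y) (hlt : card X < card Y) :
    ∃ e ∈ DeltaSet G₀, card X + e ≤ card Y := by
  obtain ⟨A, hA⟩ := card_pos_iff_exists_mem.1 (Nat.zero_lt_of_lt hlt)
  have hB0 : B ≠ 0 := fun h ↦
    (hY.1 A hA).2.1 (Multiset.le_zero.1 (h ▸ hY.2 ▸ le_sum_of_mem hA))
  obtain ⟨e, he, hle⟩ :=
    exists_mem_deltaOf_add_le hX.card_mem_lengthSet hY.card_mem_lengthSet hlt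
  exact ⟨e, ⟨B, hX.isZeroSumSeq, hB0, he⟩, hle⟩

theorem pos_of_mem_deltaSet {e : ℕ} (he : e ∈ DeltaSet G₀) : 0 < e := by
  obtain ⟨_, _, _, x, _, y, _, hxy, rfl, _⟩ := he
  exact Nat.sub_pos_of_lt hxy

theorem IsHalfFactorialSet.card_eq (hG : IsHalfFactorialSet G₀) (hX : IsFactorization G₀ B X)
    (hY : IsFactorization G₀ B Y) : card X = card Y := by
  by_contra hne
  rcases Nat.lt_or_gt_of_ne hne with hlt | hlt
  · obtain ⟨e, he, _⟩ := hX.exists_mem_deltaSet_add_le hY hlt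
    exact Set.eq_empty_iff_forall_notMem.1 hG e he
  · obtain ⟨e, he, _⟩ := hY.exists_mem_deltaSet_add_le hX hlt
    exact Set.eq_empty_iff_forall_notMem.1 hG e he

theorem exists_isFactorization_nsmul_card_eq_mul_crossNumber {N : ℕ} (hA : ∀ x ∈ A, x ∈ G₀)
    (hfin : ∀ x ∈ A, IsOfFinAddOrder x) (hN : ∀ x ∈ A, addOrderOf x ∣ N) :
    ∃ X, IsFactorization G₀ (N • A) X ∧ (card X : ℚ) = N * crossNumber A := by
  induction A using Multiset.induction_on with
  | empty => exact ⟨0, by simpa using isFactorization_zero, by simp⟩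
  | cons a A ih =>
    simp only [mem_cons, forall_eq_or_imp] at hA hfin hN
    obtain ⟨X, hX, hcard⟩ := ih hA.2 hfin.2 hN.2
    have ha := (isAtomSeq_replicate_addOrderOf hA.1 hfin.1).isFactorization_replicate
      (N / addOrderOf a)
    rw [nsmul_replicate, Nat.div_mul_cancel hN.1] at ha
    refine ⟨_, by simpa [← singleton_add, nsmul_singleton] using ha.add hX, ?_⟩
    rw [card_add, card_replicate, Nat.cast_add, hcard, crossNumber_cons, mul_add,
      Nat.cast_div_charZero hN.1, div_eq_mul_inv]

theorem IsHalfFactorialSet.crossNumber_eq_one (hG : IsHalfFactorialSet G₀) (hA : IsAtomSeq G₀ A)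
    (hfin : ∀ x ∈ A, IsOfFinAddOrder x) : crossNumber A = 1 := by
  obtain ⟨N, hN, hdvd⟩ := exists_pos_forall_addOrderOf_dvd hfin
  obtain ⟨X, hX, hcard⟩ :=
    exists_isFactorization_nsmul_card_eq_mul_crossNumber hA.1.1 hfin hdvd
  have hXN : card X = N := by
    simpa using hG.card_eq hX (hA.isFactorization_replicate N)
  rw [hXN] at hcard
  exact (mul_eq_left₀ (by exact_mod_cast hN.ne')).1 hcard.symm

theorem IsMinNonHalfFactorial.mem_of_crossNumber_ne_one (hmin : IsMinNonHalfFactorial G₀)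
    (hA : IsAtomSeq G₀ A) (hfin : ∀ x ∈ A, IsOfFinAddOrder x) (hk : crossNumber A ≠ 1) {x : G}
    (hx : x ∈ G₀) : x ∈ A := by
  by_contra hxA
  have hproper : {y | y ∈ A} ⊂ G₀ := ⟨hA.1.1, fun h ↦ hxA (h hx)⟩
  exact hk (IsHalfFactorialSet.crossNumber_eq_one (hmin.2 _ hproper)
    (hA.of_forall_mem fun _ hy ↦ hy) hfin)

theorem IsMinNonHalfFactorial.exists_isFactorization_crossNumber_eq_one
    (hmin : IsMinNonHalfFactorial G₀) (hfin : ∀ x ∈ G₀, IsOfFinAddOrder x) {G₁ : Set G}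
    (hG₁ : G₁ ⊂ G₀) (hB : IsZeroSumSeq G₁ B) :
    ∃ F, IsFactorization G₀ B F ∧ ∀ U ∈ F, crossNumber U = 1 := by
  obtain ⟨F, hF⟩ := hB.exists_isFactorization
  exact ⟨F, hF.mono hG₁.subset, fun U hU ↦ IsHalfFactorialSet.crossNumber_eq_one (hmin.2 _ hG₁)
    (hF.1 U hU) fun x hx ↦ hfin x (hG₁.subset ((hF.1 U hU).1.1 x hx))⟩

end Distances

section OrderBound

variable {G : Type*} [AddCommGroup G] {x : G}

theorem isAtomSeq_pair_neg (hx : x ≠ 0) : IsAtomSeq {x, -x} {x, -x} := by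
  refine isAtomSeq_iff_forall_le.2 ⟨⟨by simp, by simp⟩, by simp, fun A hle hA hA0 ↦ ?_⟩
  refine eq_of_le_of_card_le hle ?_
  by_contra hcard
  obtain ⟨y, rfl⟩ : ∃ y, A = {y} := by
    have hpos := card_pos.2 hA0
    rw [card_pair] at hcard
    exact card_eq_one.1 (by omega)
  obtain rfl : y = 0 := by simpa using hA.2
  have hmem : (0 : G) = x ∨ 0 = -x := hA.1 0 (mem_singleton_self 0)
  rcases hmem with h | h
  · exact hx h.symm
  · exact hx (neg_eq_zero.1 h.symm)

theorem IsAtomSeq.eq_replicate_or_eq_pair {A : Multiset G} (hA : IsAtomSeq {x, -x} A) :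
    A = replicate (addOrderOf x) x ∨ A = replicate (addOrderOf x) (-x) ∨ A = {x, -x} := by
  by_cases hpos : ∀ y ∈ A, y = x
  · exact .inl (hA.eq_replicate_addOrderOf hpos)
  by_cases hneg : ∀ y ∈ A, y = -x
  · exact .inr (.inl (addOrderOf_neg x ▸ hA.eq_replicate_addOrderOf hneg))
  · push Not at hpos hneg
    obtain ⟨y, hy, hyx⟩ := hpos
    obtain ⟨z, hz, hzx⟩ := hneg
    obtain rfl : y = -x := (hA.1.1 y hy).resolve_left hyx
    obtain rfl : z = x := (hA.1.1 z hz).resolve_right hzx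
    refine .inr (.inr (hA.eq_of_le ⟨by simp, by simp⟩ (by simp) ?_).symm)
    exact (cons_le_of_notMem (by simpa using hyx.symm)).2 ⟨hz, singleton_le.2 hy⟩

theorem IsFactorization.exists_card_eq_and_count_eq [DecidableEq G] (hx : -x ≠ x)
    {B : Multiset G} {X : Multiset (Multiset G)} (hX : IsFactorization {x, -x} B X) :
    ∃ a b c : ℕ, card X = a + b + c ∧ B.count x = addOrderOf x * a + c ∧
      B.count (-x) = addOrderOf x * b + c := by
  obtain ⟨hatoms, rfl⟩ := hX
  induction X using Multiset.induction_on with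
  | empty => exact ⟨0, 0, 0, by simp⟩
  | cons A X ih =>
    simp only [mem_cons, forall_eq_or_imp] at hatoms
    obtain ⟨a, b, c, hcard, hcount, hcount_neg⟩ := ih hatoms.2
    simp only [sum_cons, card_cons, count_add, hcard, hcount, hcount_neg]
    rcases hatoms.1.eq_replicate_or_eq_pair with rfl | rfl | rfl
    · exact ⟨a + 1, b, c, by ring, by rw [count_replicate_self]; ring,
        by rw [count_replicate, if_neg hx.symm]; ring⟩
    · exact ⟨a, b + 1, c, by ring, by rw [count_replicate, if_neg hx]; ring,
        by rw [count_replicate_self]; ring⟩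
    · exact ⟨a, b, c + 1, by ring,
        by rw [insert_eq_cons, count_cons_self, count_singleton, if_neg hx.symm]; ring,
        by rw [insert_eq_cons, count_cons_of_ne hx, count_singleton_self]; ring⟩

theorem sub_two_dvd_of_mem_deltaSet_pair (hx : -x ≠ x) (hfin : IsOfFinAddOrder x) {e : ℕ}
    (he : e ∈ DeltaSet ({x, -x} : Set G)) : (addOrderOf x : ℤ) - 2 ∣ e := by
  classical
  obtain ⟨B, _, _, _, ⟨X, rfl, hX⟩, _, ⟨Y, rfl, hY⟩, hlt, rfl, _⟩ := he
  obtain ⟨a, b, c, hcard, hcount, hcount_neg⟩ := IsFactorization.exists_card_eq_and_count_eq hx hX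
  obtain ⟨a', b', c', hcard', hcount', hcount_neg'⟩ :=
    IsFactorization.exists_card_eq_and_count_eq hx hY
  have hn : (addOrderOf x : ℤ) ≠ 0 := by exact_mod_cast hfin.addOrderOf_pos.ne'
  have hx_count : (addOrderOf x : ℤ) * a + c = addOrderOf x * a' + c' := by
    exact_mod_cast hcount.symm.trans hcount'
  have hneg_count : (addOrderOf x : ℤ) * b + c = addOrderOf x * b' + c' := by
    exact_mod_cast hcount_neg.symm.trans hcount_neg'
  have hab : (a : ℤ) - a' = b - b' :=
    mul_left_cancel₀ hn (by linear_combination hx_count - hneg_count)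
  refine ⟨a - a', ?_⟩
  rw [Nat.cast_sub hlt.le, hcard, hcard']
  push_cast
  linear_combination hab - hx_count

theorem deltaSet_pair_nonempty (hx : 2 < addOrderOf x) : (DeltaSet ({x, -x} : Set G)).Nonempty := by
  have hfin : IsOfFinAddOrder x := addOrderOf_pos_iff.1 (by omega)
  have hx0 : x ≠ 0 := by
    rintro rfl
    simp at hx
  have hpowers : IsFactorization {x, -x}
      (replicate (addOrderOf x) x + replicate (addOrderOf x) (-x))
      {replicate (addOrderOf x) x, replicate (addOrderOf x) (-x)} := by
    have hneg := isAtomSeq_replicate_addOrderOf (G₀ := {x, -x}) (.inr rfl) hfin.neg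
    rw [addOrderOf_neg] at hneg
    exact .cons (isAtomSeq_replicate_addOrderOf (.inl rfl) hfin) hneg.isFactorization_singleton
  have hpairs := (isAtomSeq_pair_neg hx0).isFactorization_replicate (addOrderOf x)
  rw [insert_eq_cons, ← singleton_add, nsmul_add, nsmul_singleton, nsmul_singleton] at hpairs
  obtain ⟨e, he, _⟩ := hpowers.exists_mem_deltaSet_add_le hpairs (by simpa using hx)
  exact ⟨e, he⟩

theorem addOrderOf_le_sSup_deltaStar_add_two (hbdd : BddAbove (DeltaStar G)) (x : G) :
    addOrderOf x ≤ sSup (DeltaStar G) + 2 := by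
  rcases le_or_gt (addOrderOf x) 2 with h2 | h2
  · omega
  have hneg : -x ≠ x := fun h ↦ by
    have h2x : 2 • x = 0 := by rw [two_nsmul, ← neg_eq_iff_add_eq_zero, h]
    exact h2.not_ge (Nat.le_of_dvd two_pos (addOrderOf_dvd_of_nsmul_eq_zero h2x))
  have hne := deltaSet_pair_nonempty h2
  have hmem : sInf (DeltaSet {x, -x}) ∈ DeltaSet {x, -x} := Nat.sInf_mem hne
  have hle := Int.le_of_dvd (by exact_mod_cast pos_of_mem_deltaSet hmem)
    (sub_two_dvd_of_mem_deltaSet_pair hneg (addOrderOf_pos_iff.1 (by omega)) hmem)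
  have hsup : sInf (DeltaSet {x, -x}) ≤ sSup (DeltaStar G) := le_csSup hbdd ⟨_, hne, rfl⟩
  omega

theorem bddAbove_deltaStar [Finite G] : BddAbove (DeltaStar G) := by
  refine ((Set.finite_range fun G₀ : Set G ↦ sInf (DeltaSet G₀)).subset ?_).bddAbove
  rintro _ ⟨G₀, _, rfl⟩
  exact ⟨G₀, rfl⟩

end OrderBound

section AtomRemoval

variable {G : Type*} [AddCommGroup G] {G₀ : Set G} {A A₁ A₂ S U Y : Multiset G}
  {F F₁ F₂ T X : Multiset (Multiset G)}

theorem IsFactorization.exists_card_le_or_isAtomSeq (hT : IsFactorization G₀ (U + Y) T)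
    (hU : IsAtomSeq G₀ U) (hcard : card T ≤ sInf (DeltaSet G₀) + 2) :
    (∃ Q, IsFactorization G₀ Y Q ∧ card T ≤ card Q + 1) ∨
      card T = sInf (DeltaSet G₀) + 2 ∧ IsAtomSeq G₀ Y := by
  obtain ⟨Q, hQ⟩ := (hT.isZeroSumSeq.of_add_left hU.1.2).exists_isFactorization
  refine or_iff_not_imp_left.2 fun hnot ↦ ?_
  have hlt : card Q + 1 < card T := not_le.1 fun hle ↦ hnot ⟨Q, hQ, hle⟩
  obtain ⟨e, he, hle⟩ :=
    (IsFactorization.cons hU hQ).exists_mem_deltaSet_add_le hT (by simpa using hlt)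
  have hinf : sInf (DeltaSet G₀) ≤ e := Nat.sInf_le he
  rw [card_cons] at hle
  have hQpos : 0 < card Q := by
    refine card_pos.2 fun hQ0 ↦ ?_
    obtain rfl : Y = 0 := by rw [← hQ.2, hQ0, sum_zero]
    rw [add_zero] at hT
    simp [hT.eq_singleton hU] at hlt
  obtain ⟨A, rfl⟩ := card_eq_one.1 (show card Q = 1 by omega)
  obtain rfl : A = Y := by simpa using hQ.2
  exact ⟨by omega, hQ.1 A (mem_singleton_self A)⟩

theorem IsLCNSet.one_lt_crossNumber_of_isFactorization (hLCN : IsLCNSet G₀)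
    (hT : IsFactorization G₀ (U + Y) T) (hkU : crossNumber U = 1) (hcard : 2 < card T) :
    1 < crossNumber Y := by
  have hle := card_le_crossNumber_sum fun A hA ↦ hLCN A (hT.1 A hA)
  rw [hT.2, crossNumber_add, hkU] at hle
  have : (2 : ℚ) < card T := by exact_mod_cast hcard
  linarith

theorem IsMinNonHalfFactorial.not_isAtomSeq_of_minimal_cover
    (hmin : IsMinNonHalfFactorial G₀) (hfin : ∀ x ∈ G₀, IsOfFinAddOrder x)
    (hU : IsAtomSeq G₀ U) (hkU : crossNumber U = 1)
    (hT : Minimal (fun T : Multiset (Multiset G) ↦ U ≤ T.sum) T) (hUT : card U ≤ card T)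
    (hsum : T.sum = U + Y) (hkY : 1 < crossNumber Y) : ¬ IsAtomSeq G₀ Y := by
  intro hY
  have hUY : U ⊆ Y := fun x hx ↦ hmin.mem_of_crossNumber_ne_one hY
    (fun y hy ↦ hfin y (hY.1.1 y hy)) hkY.ne' (hU.1.1 x hx)
  have hle : U ≤ Y := le_of_minimal_cover_of_subset hT hUT hsum hUY
  rw [← hY.eq_of_le hU.1 hU.2.1 hle, hkU] at hkY
  exact lt_irrefl 1 hkY

theorem IsMinNonHalfFactorial.exists_isFactorization_of_add_atom (hmin : IsMinNonHalfFactorial G₀)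
    (hLCN : IsLCNSet G₀) (hfin : ∀ x ∈ G₀, IsOfFinAddOrder x)
    (hord : ∀ x ∈ G₀, addOrderOf x ≤ sInf (DeltaSet G₀) + 2) (hU : IsAtomSeq G₀ U)
    (hkU : crossNumber U = 1) (hX : IsFactorization G₀ (U + S) X) :
    ∃ R, IsFactorization G₀ S R ∧ card X ≤ card R + 1 := by
  classical
  obtain ⟨T, hTX, hT⟩ := exists_minimal_le_of_wellFoundedLT
    (fun T : Multiset (Multiset G) ↦ U ≤ T.sum) X (hX.2 ▸ le_add_right U S)
  obtain ⟨Y, hsum⟩ := Multiset.le_iff_exists_add.1 hT.prop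
  obtain ⟨R, rfl⟩ := Multiset.le_iff_exists_add.1 hTX
  have hTfac : IsFactorization G₀ (U + Y) T := ⟨fun A hA ↦ hX.1 A (mem_add.2 (.inl hA)), hsum⟩
  have hS : S = Y + R.sum := by
    have hXsum := hX.2
    rw [sum_add, hsum, add_assoc] at hXsum
    exact (add_left_cancel hXsum).symm
  have hUcard : card U ≤ sInf (DeltaSet G₀) + 2 := by
    have := card_le_mul_crossNumber (fun x hx ↦ hfin x (hU.1.1 x hx))
      (fun x hx ↦ hord x (hU.1.1 x hx))
    rw [hkU, mul_one] at this
    exact_mod_cast this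
  have hTU := card_le_of_minimal_cover hT
  rcases hTfac.exists_card_le_or_isAtomSeq hU (hTU.trans hUcard) with ⟨Q, hQ, hle⟩ | ⟨hTcard, hY⟩
  · have hR : IsFactorization G₀ R.sum R := ⟨fun A hA ↦ hX.1 A (mem_add.2 (.inr hA)), rfl⟩
    refine ⟨Q + R, hS ▸ hQ.add hR, ?_⟩
    rw [card_add, card_add]
    omega
  · have hdist : 0 < sInf (DeltaSet G₀) := pos_of_mem_deltaSet (Nat.sInf_mem hmin.1)
    have hkY := hLCN.one_lt_crossNumber_of_isFactorization hTfac hkU (by omega)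
    exact absurd hY
      (hmin.not_isAtomSeq_of_minimal_cover hfin hU hkU hT (by omega) hsum hkY)

theorem IsMinNonHalfFactorial.card_le_card_add_one (hmin : IsMinNonHalfFactorial G₀)
    (hLCN : IsLCNSet G₀) (hfin : ∀ x ∈ G₀, IsOfFinAddOrder x)
    (hord : ∀ x ∈ G₀, addOrderOf x ≤ sInf (DeltaSet G₀) + 2) (hA : IsAtomSeq G₀ A)
    (hF : ∀ U ∈ F, IsAtomSeq G₀ U) (hkF : ∀ U ∈ F, crossNumber U = 1)
    (hX : IsFactorization G₀ (A + F.sum) X) : card X ≤ card F + 1 := by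
  induction F using Multiset.induction_on generalizing X with
  | empty =>
    rw [sum_zero, add_zero] at hX
    simp [hX.eq_singleton hA]
  | cons U F ih =>
    simp only [mem_cons, forall_eq_or_imp] at hF hkF
    rw [sum_cons, add_left_comm] at hX
    obtain ⟨R, hR, hle⟩ :=
      hmin.exists_isFactorization_of_add_atom hLCN hfin hord hF.1 hkF.1 hX
    have := ih hF.2 hkF.2 hR
    rw [card_cons]
    omega

theorem IsMinNonHalfFactorial.crossNumber_eq_of_add_sum_eq (hmin : IsMinNonHalfFactorial G₀)
    (hLCN : IsLCNSet G₀) (hfin : ∀ x ∈ G₀, IsOfFinAddOrder x)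
    (hord : ∀ x ∈ G₀, addOrderOf x ≤ sInf (DeltaSet G₀) + 2) (hA₁ : IsAtomSeq G₀ A₁)
    (hA₂ : IsAtomSeq G₀ A₂) (hF₁ : ∀ U ∈ F₁, IsAtomSeq G₀ U) (hkF₁ : ∀ U ∈ F₁, crossNumber U = 1)
    (hF₂ : ∀ U ∈ F₂, IsAtomSeq G₀ U) (hkF₂ : ∀ U ∈ F₂, crossNumber U = 1)
    (h : A₁ + F₁.sum = A₂ + F₂.sum) : crossNumber A₁ = crossNumber A₂ := by
  have hle₁ : card (A₁ ::ₘ F₁) ≤ card F₂ + 1 :=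
    hmin.card_le_card_add_one hLCN hfin hord hA₂ hF₂ hkF₂ (h ▸ .cons hA₁ ⟨hF₁, rfl⟩)
  have hle₂ : card (A₂ ::ₘ F₂) ≤ card F₁ + 1 :=
    hmin.card_le_card_add_one hLCN hfin hord hA₁ hF₁ hkF₁ (h ▸ .cons hA₂ ⟨hF₂, rfl⟩)
  rw [card_cons, Nat.add_le_add_iff_right] at hle₁ hle₂
  have hk := congrArg crossNumber h
  rw [crossNumber_add, crossNumber_add, crossNumber_sum_eq_card hkF₁,
    crossNumber_sum_eq_card hkF₂, hle₁.antisymm hle₂] at hk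
  exact add_right_cancel hk

end AtomRemoval

section Balancing

variable {G : Type*} [AddCommGroup G] [DecidableEq G] {G₀ E : Set G} {g : G} {A B : Multiset G}

theorem exists_isZeroSumSeq_add_eq_add_of_count_eq (hA : IsZeroSumSeq G₀ A)
    (hB : IsZeroSumSeq G₀ B) (hg : IsOfFinAddOrder g) (h : A.count g = B.count g) :
    ∃ V W, IsZeroSumSeq (G₀ \ {g}) V ∧ IsZeroSumSeq (G₀ \ {g}) W ∧ A + V = B + W := by
  have hsplit (S : Multiset G) : replicate (S.count g) g + S.filter (· ≠ g) = S := by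
    rw [← filter_eq', filter_add_not]
  have hmem {S : Multiset G} (hS : IsZeroSumSeq G₀ S) : ∀ x ∈ S.filter (· ≠ g), x ∈ G₀ \ {g} :=
    fun x hx ↦ ⟨hS.1 x (mem_of_mem_filter hx), (mem_filter.1 hx).2⟩
  have hsum {S : Multiset G} (hS : IsZeroSumSeq G₀ S) :
      (S.filter (· ≠ g)).sum = -(S.count g • g) := by
    rw [eq_neg_iff_add_eq_zero, add_comm, ← sum_replicate, ← sum_add, hsplit, hS.2]
  obtain ⟨n, hn⟩ := Nat.exists_eq_add_one.2 hg.addOrderOf_pos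
  set C := A.filter (· ≠ g) with hC
  set D := B.filter (· ≠ g) with hD
  have hCD : C.sum = D.sum := by rw [hsum hA, hsum hB, h]
  have hW : IsZeroSumSeq (G₀ \ {g}) (C + n • C) := by
    refine ⟨fun x hx ↦ (mem_add.1 hx).elim (hmem hA x) (hmem hA x <| mem_of_mem_nsmul ·), ?_⟩
    rw [← succ_nsmul', ← hn, sum_nsmul, hsum hA, smul_neg, smul_comm, addOrderOf_nsmul_eq_zero,
      smul_zero, neg_zero]
  refine ⟨D + n • C, C + n • C, ⟨fun x hx ↦ ?_, ?_⟩, hW, ?_⟩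
  · exact (mem_add.1 hx).elim (hmem hB x) (hmem hA x <| mem_of_mem_nsmul ·)
  · rw [sum_add, ← hCD, ← sum_add, hW.2]
  · rw [← hsplit A, ← hsplit B, ← hC, ← hD, h]
    abel

theorem exists_isZeroSumSeq_insert_count_eq (hgE : g ∉ E) (hfin : ∀ x ∈ E, IsOfFinAddOrder x)
    {n : ℕ} (hn : n • g ∈ AddSubgroup.closure E) :
    ∃ W, IsZeroSumSeq (insert g E) W ∧ W.count g = n := by
  obtain ⟨B, hBE, hBsum⟩ :=
    exists_multiset_of_mem_closure_of_isOfFinAddOrder hfin (neg_mem hn)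
  refine ⟨replicate n g + B, ⟨fun x hx ↦ ?_, ?_⟩, ?_⟩
  · exact (mem_add.1 hx).imp eq_of_mem_replicate (hBE x)
  · rw [sum_add, sum_replicate, hBsum, add_neg_cancel]
  · rw [count_add, count_replicate_self, count_eq_zero_of_notMem fun h ↦ hgE (hBE g h), add_zero]

theorem IsMinNonHalfFactorial.crossNumber_eq_of_modEq_of_count_le
    (hmin : IsMinNonHalfFactorial G₀) (hLCN : IsLCNSet G₀) (hfin : ∀ x ∈ G₀, IsOfFinAddOrder x)
    (hord : ∀ x ∈ G₀, addOrderOf x ≤ sInf (DeltaSet G₀) + 2) (hg : g ∈ G₀) (hE : E ⊂ G₀ \ {g})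
    {d : ℕ} (hd : d • g ∈ AddSubgroup.closure E) (hA : IsAtomSeq G₀ A) (hB : IsAtomSeq G₀ B)
    (hmod : B.count g ≡ A.count g [MOD d]) (hle : B.count g ≤ A.count g) :
    crossNumber A = crossNumber B := by
  obtain ⟨z, hz⟩ := (Nat.modEq_iff_dvd' hle).1 hmod
  obtain ⟨W, hW, hWcount⟩ := exists_isZeroSumSeq_insert_count_eq (n := d * z)
    (fun h ↦ (hE.subset h).2 rfl) (fun x hx ↦ hfin x (hE.subset hx).1)
    (by rw [mul_comm, mul_smul]; exact nsmul_mem hd z)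
  have hgE : insert g E ⊂ G₀ := by
    obtain ⟨h, hh, hhE⟩ := Set.exists_of_ssubset hE
    refine Set.ssubset_iff_exists.2
      ⟨Set.insert_subset hg fun x hx ↦ (hE.subset hx).1, h, hh.1, ?_⟩
    exact fun hmem ↦ hmem.elim hh.2 hhE
  have hdiff : G₀ \ {g} ⊂ G₀ := Set.sdiff_singleton_ssubset.2 hg
  obtain ⟨V₁, V₂, hV₁, hV₂, hbalance⟩ := exists_isZeroSumSeq_add_eq_add_of_count_eq hA.1
    (hB.1.add (hW.mono hgE.subset)) (hfin g hg) (by rw [count_add, hWcount]; omega)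
  obtain ⟨F₁, hF₁, hkF₁⟩ := hmin.exists_isFactorization_crossNumber_eq_one hfin hdiff hV₁
  obtain ⟨F₂, hF₂, hkF₂⟩ := hmin.exists_isFactorization_crossNumber_eq_one hfin hdiff hV₂
  obtain ⟨F, hF, hkF⟩ := hmin.exists_isFactorization_crossNumber_eq_one hfin hgE hW
  refine hmin.crossNumber_eq_of_add_sum_eq hLCN hfin hord hA hB hF₁.1 hkF₁ (hF.add hF₂).1
    (fun U hU ↦ (mem_add.1 hU).elim (hkF U) (hkF₂ U)) ?_
  rw [hF₁.2, (hF.add hF₂).2, hbalance, add_assoc]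

end Balancing

theorem stmt_16_general {G : Type*} [AddCommGroup G] [DecidableEq G] (G₀ : Set G)
    (hmin : IsMinNonHalfFactorial G₀) (hLCN : IsLCNSet G₀) (hfin : ∀ x ∈ G₀, IsOfFinAddOrder x)
    (hord : ∀ x ∈ G₀, addOrderOf x ≤ sInf (DeltaSet G₀) + 2) (g : G) (hg : g ∈ G₀)
    (d : ℕ) (hd1 : 1 ≤ d)
    (hdE : ∃ E : Set G, E ⊂ G₀ \ {g} ∧ d • g ∈ AddSubgroup.closure E)
    (hdmin : ∀ d' : ℕ, 1 ≤ d' → d' < d →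
      ¬ ∃ E : Set G, E ⊂ G₀ \ {g} ∧ d' • g ∈ AddSubgroup.closure E) :
    d ∣ addOrderOf g ∧
    ∀ A₁ A₂ : Multiset G, IsAtomSeq G₀ A₁ → IsAtomSeq G₀ A₂ →
      A₁.count g ≡ A₂.count g [MOD d] → crossNumber A₁ = crossNumber A₂ := by
  obtain ⟨E, hE, hdg⟩ := hdE
  refine ⟨?_, fun A₁ A₂ hA₁ hA₂ hmod ↦ ?_⟩
  · have hge : d ≤ d.gcd (addOrderOf g) := not_lt.1 fun hlt ↦
      hdmin _ (Nat.gcd_pos_of_pos_left _ hd1) hlt ⟨E, hE, gcd_addOrderOf_nsmul_mem hdg⟩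
    exact Nat.gcd_eq_left_iff_dvd.1 ((Nat.gcd_le_left _ hd1).antisymm hge)
  · rcases le_total (A₂.count g) (A₁.count g) with hle | hle
    · exact hmin.crossNumber_eq_of_modEq_of_count_le hLCN hfin hord hg hE hdg hA₁ hA₂ hmod.symm hle
    · exact (hmin.crossNumber_eq_of_modEq_of_count_le hLCN hfin hord hg hE hdg hA₂ hA₁ hmod
        hle).symm

/-- With `G₀` a minimal non-half-factorial LCN-set with
`min Δ(G₀) = max Δ*(G)`, `g ∈ G₀` with `g ∈ ⟨G₀ \ {g}⟩`, and `d ∈ [1, ord(g)]` minimal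
such that `d·g ∈ ⟨E⟩` for some proper subset `E ⊊ G₀ \ {g}`: then `d ∣ ord(g)`, and atoms
`A₁, A₂` over `G₀` with `v_g(A₁) ≡ v_g(A₂) (mod d)` have equal cross numbers. -/
theorem stmt_16 {G : Type*} [AddCommGroup G] [Fintype G] [DecidableEq G] (G₀ : Set G)
    (hmin : IsMinNonHalfFactorial G₀) (hLCN : IsLCNSet G₀)
    (hmax : sInf (DeltaSet G₀) = sSup (DeltaStar G))
    (g : G) (hg : g ∈ G₀) (hgen : g ∈ AddSubgroup.closure (G₀ \ {g}))
    (d : ℕ) (hd1 : 1 ≤ d) (hd2 : d ≤ addOrderOf g)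
    (hdE : ∃ E : Set G, E ⊂ G₀ \ {g} ∧ d • g ∈ AddSubgroup.closure E)
    (hdmin : ∀ d' : ℕ, 1 ≤ d' → d' < d →
      ¬ ∃ E : Set G, E ⊂ G₀ \ {g} ∧ d' • g ∈ AddSubgroup.closure E) :
    d ∣ addOrderOf g ∧
    ∀ A₁ A₂ : Multiset G, IsAtomSeq G₀ A₁ → IsAtomSeq G₀ A₂ →
      A₁.count g ≡ A₂.count g [MOD d] → crossNumber A₁ = crossNumber A₂ := by
  exact stmt_16_general G₀ hmin hLCN (fun x _ ↦ isOfFinAddOrder_of_finite x)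
    (fun x _ ↦ hmax ▸ addOrderOf_le_sSup_deltaStar_add_two bddAbove_deltaStar x)
    g hg d hd1 hdE hdmin
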